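/- arXiv:2002.11961 — 2 statements merged into one kernel-verified Lean document; each statement's English description precedes it below -/
import Mathlib

section
/- Let X be a reflexive real Banach space. Then every nonempty closed convex subset of X is simultaneously approximatively weakly compact. -/
/-!
A minimizing sequence `y` for a bounded nonempty set `A` is norm bounded, say by `R`, because
`‖y n‖ ≤ ‖a‖ + sup_{b ∈ A} ‖b - y n‖` for any `a ∈ A`. It therefore lies in `K`, the intersection
of `C`, the ball of radius `R` and the closed linear span of the sequence. This `K` is closed, convex and bounded,
hence weakly compact by reflexivity (`isCompact_toWeakSpace_image`). It also lies in a separable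
subspace, so countably many functionals separate its points
(`exists_seq_functionals_separating`). A compact space with a countable separating family of
continuous functions is metrizable, and so `y` has a subsequence converging weakly to a point of
`K ⊆ C` (`exists_weakTendsto_subseq`).
-/

open Filter Topology Pointwise

variable {X : Type*} [NormedAddCommGroup X] [NormedSpace ℝ X]

/-- `simSup A y = sup_{a ∈ A} ‖a - y‖`. -/
noncomputable def simSup (A : Set X) (y : X) : ℝ := ⨆ a : A, ‖(a : X) - y‖

/-- `simDist A C = inf_{y ∈ C} sup_{a ∈ A} ‖a - y‖`. -/
noncomputable def simDist (A C : Set X) : ℝ := ⨅ y : C, simSup A (y : X)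

/-- The set of best simultaneous approximations `P_C(A)`. -/
def simBest (A C : Set X) : Set X := {y | y ∈ C ∧ simSup A y = simDist A C}

/-- The set `P_C(A, δ)`. -/
def simBestApprox (A C : Set X) (δ : ℝ) : Set X :=
  {y | y ∈ C ∧ simSup A y < simDist A C + δ}

/-- `C` is simultaneously proximinal. -/
def SimProximinal (C : Set X) : Prop :=
  ∀ A : Set X, A.Nonempty → Bornology.IsBounded A → (simBest A C).Nonempty

/-- `y` is a minimizing sequence in `C` for `A`. -/
def IsMinimizing (A C : Set X) (y : ℕ → X) : Prop :=
  (∀ n, y n ∈ C) ∧ Tendsto (fun n => simSup A (y n)) atTop (𝓝 (simDist A C))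

/-- Weak convergence of a sequence. -/
def WeakTendsto (y : ℕ → X) (c : X) : Prop :=
  ∀ f : X →L[ℝ] ℝ, Tendsto (fun n => f (y n)) atTop (𝓝 (f c))

/-- `C` is simultaneously approximatively compact. -/
def SimApproxCompact (C : Set X) : Prop :=
  ∀ A : Set X, A.Nonempty → Bornology.IsBounded A → ∀ y : ℕ → X, IsMinimizing A C y →
    ∃ c ∈ C, ∃ φ : ℕ → ℕ, StrictMono φ ∧ Tendsto (y ∘ φ) atTop (𝓝 c)

/-- `C` is simultaneously approximatively weakly compact. -/
def SimApproxWeakCompact (C : Set X) : Prop :=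
  ∀ A : Set X, A.Nonempty → Bornology.IsBounded A → ∀ y : ℕ → X, IsMinimizing A C y →
    ∃ c ∈ C, ∃ φ : ℕ → ℕ, StrictMono φ ∧ WeakTendsto (y ∘ φ) c

/-- `C` is simultaneously strongly proximinal. -/
def SimStronglyProximinal (C : Set X) : Prop :=
  SimProximinal C ∧ ∀ A : Set X, A.Nonempty → Bornology.IsBounded A → ∀ ε > (0 : ℝ),
    ∃ δ > (0 : ℝ), simBestApprox A C δ ⊆ simBest A C + Metric.closedBall (0 : X) ε

/-- `C` is simultaneously weakly strongly proximinal. -/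
def SimWeakStronglyProximinal (C : Set X) : Prop :=
  SimProximinal C ∧ ∀ A : Set X, A.Nonempty → Bornology.IsBounded A →
    ∀ V : Set X, V ∈ 𝓝 (0 : WeakSpace ℝ X) → ∃ δ > (0 : ℝ),
      simBestApprox A C δ ⊆ simBest A C + V
/-- A separable set `S` in a normed space admits a sequence of functionals vanishing simultaneously
at no nonzero point of `closure S`: take norming functionals of a sequence dense in `S`. -/
lemma exists_seq_functionals_separating {S : Set X} (hS : TopologicalSpace.IsSeparable S)
    (hne : S.Nonempty) :
    ∃ f : ℕ → StrongDual ℝ X, ∀ z ∈ closure S, (∀ k, f k z = 0) → z = 0 := by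
  obtain ⟨c, hc, hSc⟩ := hS
  have hcne : c.Nonempty := closure_nonempty_iff.1 (hne.mono hSc)
  obtain ⟨d, rfl⟩ := hc.exists_eq_range hcne
  choose f hf1 hfd using fun k => exists_dual_vector'' ℝ (d k)
  refine ⟨f, fun z hz h0 => ?_⟩
  have hz' : z ∈ closure (Set.range d) := closure_minimal hSc isClosed_closure hz
  refine norm_le_zero_iff.1 (le_of_forall_pos_le_add fun ε hε => ?_)
  obtain ⟨_, ⟨k, rfl⟩, hk⟩ := Metric.mem_closure_iff.1 hz' (ε / 2) (half_pos hε)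
  rw [dist_eq_norm] at hk
  -- `‖d k‖ = f k (d k - z) ≤ ‖d k - z‖`, since `f k z = 0`.
  have h1 : ‖d k‖ ≤ ‖z - d k‖ := by
    have h2 : f k (d k - z) = ‖d k‖ := by simpa [h0 k] using hfd k
    rw [← h2, norm_sub_rev]
    exact (le_abs_self _).trans (by simpa using (f k).le_of_opNorm_le (hf1 k) (d k - z))
  have h3 : ‖z‖ ≤ ‖z - d k‖ + ‖d k‖ := by simpa using norm_add_le (z - d k) (d k)
  linarith

/-- Banach–Alaoglu, transported to `X` through the surjective canonical embedding; a convex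
norm-closed set is weakly closed. -/
lemma isCompact_toWeakSpace_image
    (hrefl : Function.Surjective (NormedSpace.inclusionInDoubleDual ℝ X)) {K : Set X}
    (hcl : IsClosed K) (hconv : Convex ℝ K) (hb : Bornology.IsBounded K) :
    IsCompact (toWeakSpace ℝ X '' K) := by
  have h := NormedSpace.isCompact_closure_of_isBounded ℝ X (toWeakSpace ℝ X '' K)
    (by rwa [Set.preimage_image_eq _ (toWeakSpace ℝ X).injective])
    (fun φ _ => by
      obtain ⟨x, hx⟩ := hrefl (WeakDual.toStrongDual φ)
      exact ⟨toWeakSpace ℝ X x, hx⟩)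
  rwa [← hconv.toWeakSpace_closure ℝ, hcl.closure_eq] at h

/-- On a weakly compact set on which countably many functionals separate points, the weak topology
is metrizable, so sequences have weakly convergent subsequences. -/
lemma exists_weakTendsto_subseq {K : Set X} (hK : IsCompact (toWeakSpace ℝ X '' K))
    (f : ℕ → StrongDual ℝ X) (hf : ∀ x ∈ K, ∀ z ∈ K, (∀ k, f k x = f k z) → x = z)
    {y : ℕ → X} (hy : ∀ n, y n ∈ K) :
    ∃ c ∈ K, ∃ φ : ℕ → ℕ, StrictMono φ ∧ WeakTendsto (y ∘ φ) c := by
  have hcont : ∀ g : StrongDual ℝ X,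
      Continuous fun x : WeakSpace ℝ X => g ((toWeakSpace ℝ X).symm x) :=
    fun g => WeakBilin.eval_continuous _ g
  have : CompactSpace (toWeakSpace ℝ X '' K) := isCompact_iff_compactSpace.1 hK
  have : TopologicalSpace.MetrizableSpace (toWeakSpace ℝ X '' K) := by
    refine Metric.PiNatEmbed.TopologicalSpace.MetrizableSpace.of_countable_separating
      (fun k x => f k ((toWeakSpace ℝ X).symm x.1))
      (fun k => (hcont (f k)).comp continuous_subtype_val) ?_
    rintro ⟨_, x, hx, rfl⟩ ⟨_, z, hz, rfl⟩ hxz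
    by_contra! h
    exact hxz (Subtype.ext (congrArg (toWeakSpace ℝ X) (hf x hx z hz (by simpa using h))))
  obtain ⟨⟨_, c, hc, rfl⟩, φ, hφ, hlim⟩ := CompactSpace.tendsto_subseq
    (fun n => (⟨toWeakSpace ℝ X (y n), y n, hy n, rfl⟩ : toWeakSpace ℝ X '' K))
  refine ⟨c, hc, φ, hφ, fun g => ?_⟩
  exact (((hcont g).comp continuous_subtype_val).tendsto _).comp hlim

lemma norm_sub_le_simSup {A : Set X} (hA : Bornology.IsBounded A) {a : X} (ha : a ∈ A) (y : X) :
    ‖a - y‖ ≤ simSup A y := by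
  obtain ⟨R, hR⟩ := hA.exists_norm_le
  refine le_ciSup (f := fun a : A => ‖(a : X) - y‖) ⟨R + ‖y‖, ?_⟩ ⟨a, ha⟩
  rintro _ ⟨b, rfl⟩
  exact (norm_sub_le _ _).trans (by gcongr; exact hR b b.2)

lemma IsMinimizing.exists_norm_le {A C : Set X} (hne : A.Nonempty) (hA : Bornology.IsBounded A)
    {y : ℕ → X} (hy : IsMinimizing A C y) : ∃ R, ∀ n, ‖y n‖ ≤ R := by
  obtain ⟨a, ha⟩ := hne
  obtain ⟨M, hM⟩ := hy.2.bddAbove_range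
  refine ⟨‖a‖ + M, fun n => ?_⟩
  have h1 := norm_sub_le_simSup hA ha (y n)
  have h2 : simSup A (y n) ≤ M := hM ⟨n, rfl⟩
  have h3 : ‖y n‖ ≤ ‖a‖ + ‖a - y n‖ := by simpa using norm_sub_le a (a - y n)
  linarith

/-- In a reflexive Banach space every nonempty closed convex subset is simultaneously
approximatively weakly compact. -/
theorem reflexive_closed_convex_simApproxWeakCompact [CompleteSpace X]
    (hrefl : Function.Surjective (NormedSpace.inclusionInDoubleDual ℝ X)) :
    ∀ C : Set X, C.Nonempty → IsClosed C → Convex ℝ C → SimApproxWeakCompact C := by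
  intro C _ hCcl hCconv A hAne hAb y hy
  obtain ⟨R, hR⟩ := hy.exists_norm_le hAne hAb
  let M : Submodule ℝ X := Submodule.span ℝ (Set.range y)
  have hsep : TopologicalSpace.IsSeparable (M : Set X) :=
    (Set.countable_range y).isSeparable.span
  obtain ⟨f, hf⟩ := exists_seq_functionals_separating hsep ⟨0, M.zero_mem⟩
  let K : Set X := C ∩ (Metric.closedBall 0 R ∩ (M.topologicalClosure : Set X))
  have hKcompact : IsCompact (toWeakSpace ℝ X '' K) :=
    isCompact_toWeakSpace_image hrefl
      (hCcl.inter (Metric.isClosed_closedBall.inter M.isClosed_topologicalClosure))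
      (hCconv.inter ((convex_closedBall 0 R).inter M.topologicalClosure.convex))
      (Metric.isBounded_closedBall.subset fun _ h => h.2.1)
  obtain ⟨c, hc, φ, hφ, hlim⟩ := exists_weakTendsto_subseq hKcompact f
    (fun x hx z hz h => sub_eq_zero.1 <|
      hf (x - z) (M.topologicalClosure.sub_mem hx.2.2 hz.2.2) fun k => by simp [h k])
    (y := y) (fun n => ⟨hy.1 n, by simpa using hR n,
      M.le_topologicalClosure (Submodule.subset_span ⟨n, rfl⟩)⟩)
  exact ⟨c, hc.1, φ, hφ, hlim⟩
end

section
/- Let X be a real Banach space and let C, D ⊆ X be nonempty convex sets such that C is compact and D is simultaneously weakly strongly proximinal. Then C + D is simultaneously weakly strongly proximinal. -/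
/-!
Write `A - c` for the translate of `A`. Since `sup_{a ∈ A} ‖a - (c + y)‖ = sup_{b ∈ A - c} ‖b - y‖`,
approximating `A` by `c + D` is the same as approximating `A - c` by `D`.

Let `c n + e n` be a minimizing sequence for `A` in `C + D`. By compactness a subsequence of `c`
converges in norm to some `c₀ ∈ C`. As `simSup A` is 1-Lipschitz, `e` is, along that subsequence,
a minimizing sequence for `A - c₀` in `D`, and `d(A - c₀, D) = d(A, C + D)`
(`exists_limit_of_minimizing`). Hence `c₀ + P_D(A - c₀) ⊆ P_{C+D}(A)`, which gives proximinality.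
For weak strong proximinality, choose a weak neighbourhood `W` of `0` with `W + W ⊆ V`: along the
subsequence, `e n ∈ P_D(A - c₀) + W` and `c n - c₀ ∈ W` eventually, so
`c n + e n ∈ P_{C+D}(A) + V`; a sequence witnessing failure therefore cannot exist.
-/

open Filter Topology Pointwise

variable {X : Type*} [NormedAddCommGroup X] [NormedSpace ℝ X]

lemma simSup_bddAbove {A : Set X} (hb : Bornology.IsBounded A) (y : X) :
    BddAbove (Set.range fun a : A => ‖(a : X) - y‖) := by
  obtain ⟨R, hR⟩ := hb.exists_norm_le
  refine ⟨R + ‖y‖, ?_⟩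
  rintro _ ⟨a, rfl⟩
  exact (norm_sub_le _ _).trans (by gcongr; exact hR a a.2)

lemma simSup_nonneg (A : Set X) (y : X) : 0 ≤ simSup A y :=
  Real.iSup_nonneg fun _ => norm_nonneg _

lemma simDist_le_simSup (A : Set X) {C : Set X} {y : X} (hy : y ∈ C) :
    simDist A C ≤ simSup A y :=
  ciInf_le (f := fun y : C => simSup A (y : X))
    ⟨0, by rintro _ ⟨z, rfl⟩; exact simSup_nonneg A z⟩ ⟨y, hy⟩

lemma simSup_le_add {A : Set X} (hA : A.Nonempty) (hb : Bornology.IsBounded A) (y z : X) :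
    simSup A z ≤ simSup A y + ‖y - z‖ := by
  have := hA.to_subtype
  refine ciSup_le fun a => ?_
  have h : ‖(a : X) - y‖ ≤ simSup A y := le_ciSup (simSup_bddAbove hb y) a
  have h2 := norm_add_le ((a : X) - y) (y - z)
  rw [sub_add_sub_cancel] at h2
  linarith

lemma simSup_translate (A : Set X) (c y : X) :
    simSup ((fun a => a - c) '' A) y = simSup A (c + y) := by
  symm
  refine Function.Surjective.iSup_congr
    (fun a : A => (⟨(a : X) - c, a, a.2, rfl⟩ : ((fun a => a - c) '' A : Set X))) ?_ ?_
  · rintro ⟨_, a, ha, rfl⟩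
    exact ⟨⟨a, ha⟩, rfl⟩
  · intro a
    simp [sub_sub]

lemma isBounded_translate {A : Set X} (hb : Bornology.IsBounded A) (c : X) :
    Bornology.IsBounded ((fun a => a - c) '' A) := by
  obtain ⟨R, hR⟩ := hb.exists_norm_le
  refine isBounded_iff_forall_norm_le.2 ⟨R + ‖c‖, ?_⟩
  rintro _ ⟨a, ha, rfl⟩
  exact (norm_sub_le _ _).trans (by gcongr; exact hR a ha)

lemma exists_simSup_lt (A : Set X) {C : Set X} (hC : C.Nonempty) {δ : ℝ} (hδ : 0 < δ) :
    (simBestApprox A C δ).Nonempty := by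
  have := hC.to_subtype
  obtain ⟨y, hy⟩ := exists_lt_of_ciInf_lt (f := fun y : C => simSup A (y : X))
    (show simDist A C < simDist A C + δ by linarith)
  exact ⟨y, y.2, hy⟩

/-- The compactness step: along a subsequence, the `C`-components of a minimizing sequence in
`C + D` converge to some `c₀`, and the `D`-components are minimizing for the translate `A - c₀`. -/
lemma exists_limit_of_minimizing {A C D : Set X} (hA : A.Nonempty) (hb : Bornology.IsBounded A)
    (hD : D.Nonempty) (hC : IsCompact C) {c e : ℕ → X} (hc : ∀ n, c n ∈ C) (he : ∀ n, e n ∈ D)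
    (h : ∀ n : ℕ, simSup A (c n + e n) < simDist A (C + D) + 1 / ((n : ℝ) + 1)) :
    ∃ c₀ ∈ C, ∃ φ : ℕ → ℕ, Tendsto (c ∘ φ) atTop (𝓝 c₀) ∧
      simDist ((fun a => a - c₀) '' A) D = simDist A (C + D) ∧
      Tendsto (fun n => simSup ((fun a => a - c₀) '' A) (e (φ n))) atTop
        (𝓝 (simDist A (C + D))) := by
  obtain ⟨c₀, hc₀, φ, hφ, hlim⟩ := hC.tendsto_subseq hc
  have hDne := hD.to_subtype
  have hlow : simDist A (C + D) ≤ simDist ((fun a => a - c₀) '' A) D := by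
    refine le_ciInf fun y => ?_
    rw [simSup_translate]
    exact simDist_le_simSup A (Set.add_mem_add hc₀ y.2)
  have hup : ∀ n, simSup ((fun a => a - c₀) '' A) (e (φ n)) ≤
      simDist A (C + D) + 1 / ((φ n : ℝ) + 1) + ‖c (φ n) - c₀‖ := by
    intro n
    rw [simSup_translate]
    have h1 := simSup_le_add hA hb (c (φ n) + e (φ n)) (c₀ + e (φ n))
    rw [add_sub_add_right_eq_sub] at h1
    linarith [h (φ n)]
  have hT : Tendsto (fun n => simDist A (C + D) + 1 / ((φ n : ℝ) + 1) + ‖c (φ n) - c₀‖) atTop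
      (𝓝 (simDist A (C + D))) := by
    have h1 : Tendsto (fun n => 1 / ((φ n : ℝ) + 1)) atTop (𝓝 0) :=
      (tendsto_one_div_add_atTop_nhds_zero_nat (𝕜 := ℝ)).comp hφ.tendsto_atTop
    have h2 : Tendsto (fun n => ‖c (φ n) - c₀‖) atTop (𝓝 0) :=
      tendsto_iff_norm_sub_tendsto_zero.1 hlim
    simpa using (h1.const_add (simDist A (C + D))).add h2
  have hle : ∀ n, simDist ((fun a => a - c₀) '' A) D ≤
      simSup ((fun a => a - c₀) '' A) (e (φ n)) := fun n => simDist_le_simSup _ (he _)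
  refine ⟨c₀, hc₀, φ, hlim, le_antisymm ?_ hlow, ?_⟩
  · exact ge_of_tendsto' hT fun n => (hle n).trans (hup n)
  · exact tendsto_of_tendsto_of_tendsto_of_le_of_le tendsto_const_nhds hT
      (fun n => hlow.trans (hle n)) hup

lemma add_mem_simBest {A C D : Set X} {c y : X} (hc : c ∈ C)
    (hd : simDist ((fun a => a - c) '' A) D = simDist A (C + D))
    (hy : y ∈ simBest ((fun a => a - c) '' A) D) : c + y ∈ simBest A (C + D) := by
  refine ⟨Set.add_mem_add hc hy.1, ?_⟩
  rw [← simSup_translate, hy.2, hd]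

/-- A weak neighbourhood `V` of `0` contains `W + W` for some weak neighbourhood `W` of `0`, which
is also a norm neighbourhood. -/
lemma exists_weak_half {V : Set X} (hV : V ∈ 𝓝 (0 : WeakSpace ℝ X)) :
    ∃ W : Set X, W ∈ 𝓝 (0 : WeakSpace ℝ X) ∧ W ∈ 𝓝 (0 : X) ∧
      ∀ v ∈ W, ∀ w ∈ W, v + w ∈ V := by
  obtain ⟨W, hW, hWV⟩ := exists_nhds_zero_half (M := WeakSpace ℝ X) hV
  refine ⟨W, hW, ?_, hWV⟩
  have h := (toWeakSpaceCLM ℝ X).continuous.tendsto 0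
  rw [map_zero] at h
  exact h hW

/-- The sum of a compact convex set and a simultaneously weakly strongly proximinal convex set
is simultaneously weakly strongly proximinal. -/
theorem compact_add_simWeakStronglyProximinal [CompleteSpace X]
    (C D : Set X) (hCne : C.Nonempty) (hDne : D.Nonempty)
    (hCc : Convex ℝ C) (hDc : Convex ℝ D)
    (hC : IsCompact C) (hD : SimWeakStronglyProximinal D) :
    SimWeakStronglyProximinal (C + D) := by
  refine ⟨fun A hA hb => ?_, fun A hA hb V hV => ?_⟩
  · have h : ∀ n : ℕ, ∃ c ∈ C, ∃ e ∈ D,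
        simSup A (c + e) < simDist A (C + D) + 1 / ((n : ℝ) + 1) := by
      intro n
      obtain ⟨_, ⟨c, hc, e, he, rfl⟩, hlt⟩ :=
        exists_simSup_lt A (hCne.add hDne) (Nat.one_div_pos_of_nat (α := ℝ) (n := n))
      exact ⟨c, hc, e, he, hlt⟩
    choose c hc e he hlt using h
    obtain ⟨c₀, hc₀, -, -, hd, -⟩ := exists_limit_of_minimizing hA hb hDne hC hc he hlt
    obtain ⟨y, hy⟩ := hD.1 _ (hA.image _) (isBounded_translate hb c₀)
    exact ⟨c₀ + y, add_mem_simBest hc₀ hd hy⟩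
  · by_contra! hcon
    have h : ∀ n : ℕ, ∃ c ∈ C, ∃ e ∈ D,
        simSup A (c + e) < simDist A (C + D) + 1 / ((n : ℝ) + 1) ∧
          c + e ∉ simBest A (C + D) + V := by
      intro n
      obtain ⟨_, ⟨⟨c, hc, e, he, rfl⟩, hlt⟩, hn⟩ :=
        Set.not_subset.1 (hcon _ (Nat.one_div_pos_of_nat (α := ℝ) (n := n)))
      exact ⟨c, hc, e, he, hlt, hn⟩
    choose c hc e he hlt hn using h
    obtain ⟨c₀, hc₀, φ, hlim, hd, hmin⟩ := exists_limit_of_minimizing hA hb hDne hC hc he hlt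
    obtain ⟨W, hW, hW', hWV⟩ := exists_weak_half hV
    obtain ⟨δ, hδ, hsub⟩ := hD.2 _ (hA.image _) (isBounded_translate hb c₀) W hW
    have h1 : ∀ᶠ n in atTop, c (φ n) - c₀ ∈ W := by
      have : Tendsto (fun n => c (φ n) - c₀) atTop (𝓝 0) := by
        simpa using hlim.sub_const c₀
      exact this hW'
    have h2 : ∀ᶠ n in atTop, simSup ((fun a => a - c₀) '' A) (e (φ n)) <
        simDist A (C + D) + δ := hmin.eventually_lt_const (by linarith)
    obtain ⟨n, hn1, hn2⟩ := (h1.and h2).exists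
    rw [← hd] at hn2
    obtain ⟨y, hy, w, hw, hyw⟩ := hsub ⟨he (φ n), hn2⟩
    refine hn (φ n) ⟨c₀ + y, add_mem_simBest hc₀ hd hy, (c (φ n) - c₀) + w, hWV _ hn1 _ hw, ?_⟩
    simp only at hyw ⊢
    rw [← hyw]
    abel
end
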